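/- For every admissible pair (φ,ψ) and every s > 0, the energy admits the completed-square decomposition E(φ,ψ;s) = (1/2)∫_{-m}^ℓ (s δ0 + s ε0/3)(ψ' + k φ)² + (1/2)∫_{-m}^ℓ p ρ0 [(ψ' + k φ) − (g/p) ψ]² + (s/2)∫_{-m}^ℓ ε0 [(φ' − k ψ)² + (ψ' − k φ)²] + ((σ k² − g(ρ0⁺ − ρ0⁻))/2) ψ(0)². -/

import Mathlib

open Set MeasureTheory intervalIntegral Filter Topology

noncomputable section

namespace RT

/-- The piecewise integral `∫_{-m}^0 + ∫_0^ℓ`. -/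
def pwInt (m l : ℝ) (f : ℝ → ℝ) : ℝ :=
  (∫ x in (-m)..(0:ℝ), f x) + ∫ x in (0:ℝ)..l, f x

/-- `f` restricted to `[-m,0)` extends continuously to `[-m,0]`, and `f` restricted to
`(0,ℓ]` extends continuously to `[0,ℓ]`. -/
def PiecewiseCont (m l : ℝ) (f : ℝ → ℝ) : Prop :=
  (∃ F : ℝ → ℝ, ContinuousOn F (Icc (-m) 0) ∧ EqOn f F (Ico (-m) 0)) ∧
  (∃ F : ℝ → ℝ, ContinuousOn F (Icc 0 l) ∧ EqOn f F (Ioc 0 l))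

/-- A profile function: the restriction to `[-m,0)` extends continuously to `[-m,0]`, and
the function is continuous on `[0,ℓ]` (hence right-continuous at `0`). -/
def Profile (m l : ℝ) (f : ℝ → ℝ) : Prop :=
  (∃ F : ℝ → ℝ, ContinuousOn F (Icc (-m) 0) ∧ EqOn f F (Ico (-m) 0)) ∧
  ContinuousOn f (Icc 0 l)

/-- The four steady-state profiles `ρ0, p, ε0, δ0` with their positivity assumptions. -/
def ProfilesHyp (m l : ℝ) (ρ0 p ε0 δ0 : ℝ → ℝ) : Prop :=
  Profile m l ρ0 ∧ Profile m l p ∧ Profile m l ε0 ∧ Profile m l δ0 ∧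
  (∀ x ∈ Icc (-m) l, 0 < ρ0 x) ∧ (∀ x ∈ Icc (-m) l, 0 < p x) ∧
  (∀ x ∈ Icc (-m) l, 0 < ε0 x) ∧ (∀ x ∈ Icc (-m) l, 0 ≤ δ0 x)

/-- `f` is continuous on `[-m,ℓ]` and continuously differentiable on `[-m,0]` and on
`[0,ℓ]`, with piecewise derivative `fd`. -/
def PiecewiseC1 (m l : ℝ) (f fd : ℝ → ℝ) : Prop :=
  ContinuousOn f (Icc (-m) l) ∧
  (∀ x ∈ Ico (-m) 0, HasDerivWithinAt f (fd x) (Icc (-m) 0) x) ∧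
  (∀ x ∈ Ioc 0 l, HasDerivWithinAt f (fd x) (Icc 0 l) x) ∧
  PiecewiseCont m l fd

/-- An admissible pair `(φ,ψ)` with piecewise derivatives `(φd,ψd)`. -/
def Admissible (m l : ℝ) (φ ψ φd ψd : ℝ → ℝ) : Prop :=
  PiecewiseC1 m l φ φd ∧ PiecewiseC1 m l ψ ψd ∧
  φ (-m) = 0 ∧ φ l = 0 ∧ ψ (-m) = 0 ∧ ψ l = 0

/-- The energy `E(φ,ψ;s)`. -/
def energyE (m l g σ k : ℝ) (ρ0 p ε0 δ0 : ℝ → ℝ) (φ ψ φd ψd : ℝ → ℝ) (s : ℝ) : ℝ :=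
  σ * k ^ 2 / 2 * (ψ 0) ^ 2
  + (1 / 2) * pwInt m l (fun x =>
      (s * δ0 x + p x * ρ0 x) * (ψd x + k * φ x) ^ 2 - 2 * g * ρ0 x * k * φ x * ψ x)
  + (s / 2) * pwInt m l (fun x =>
      ε0 x * ((φd x - k * ψ x) ^ 2 + (ψd x - k * φ x) ^ 2
        + (1 / 3) * (ψd x + k * φ x) ^ 2))

/-- The normalization functional `J(φ,ψ)`. -/
def energyJ (m l : ℝ) (ρ0 : ℝ → ℝ) (φ ψ : ℝ → ℝ) : ℝ :=
  (1 / 2) * pwInt m l (fun x => ρ0 x * ((φ x) ^ 2 + (ψ x) ^ 2))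

/-- The viscous part `E1(φ,ψ)` of the energy. -/
def energyE1 (m l k : ℝ) (ε0 δ0 : ℝ → ℝ) (φ ψ φd ψd : ℝ → ℝ) : ℝ :=
  (1 / 2) * pwInt m l (fun x => (δ0 x + ε0 x / 3) * (ψd x + k * φ x) ^ 2)
  + (1 / 2) * pwInt m l (fun x =>
      ε0 x * ((φd x - k * ψ x) ^ 2 + (ψd x - k * φ x) ^ 2))

/-- `μ(s)`: the infimum of `E(·,·;s)` over admissible pairs with `J = 1`. -/
def muInf (m l g σ k : ℝ) (ρ0 p ε0 δ0 : ℝ → ℝ) (s : ℝ) : ℝ :=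
  sInf { e : ℝ | ∃ φ ψ φd ψd : ℝ → ℝ, Admissible m l φ ψ φd ψd ∧
    energyJ m l ρ0 φ ψ = 1 ∧ e = energyE m l g σ k ρ0 p ε0 δ0 φ ψ φd ψd s }

/-- The hydrostatic steady-state relation `ρ0' = -g ρ0 / p` on each piece. -/
def Hydrostatic (m l g : ℝ) (ρ0 p : ℝ → ℝ) : Prop :=
  (∀ x ∈ Ico (-m) 0, HasDerivWithinAt ρ0 (-g * ρ0 x / p x) (Ico (-m) 0) x) ∧
  (∀ x ∈ Ioc 0 l, HasDerivWithinAt ρ0 (-g * ρ0 x / p x) (Ioc 0 l) x)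

end RT

namespace RT

/-- `f` agrees on `(a,b)` with a function continuous on `[a,b]`. -/
def Ext (a b : ℝ) (f : ℝ → ℝ) : Prop :=
  ∃ F : ℝ → ℝ, ContinuousOn F (Icc a b) ∧ EqOn f F (Ioo a b)

theorem Ext.add {a b : ℝ} {f h : ℝ → ℝ} (hf : Ext a b f) (hh : Ext a b h) :
    Ext a b (fun x => f x + h x) := by
  obtain ⟨F, hF, eF⟩ := hf
  obtain ⟨H, hH, eH⟩ := hh
  exact ⟨fun x => F x + H x, hF.add hH, fun x hx => by simp only [eF hx, eH hx]⟩

theorem Ext.sub {a b : ℝ} {f h : ℝ → ℝ} (hf : Ext a b f) (hh : Ext a b h) :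
    Ext a b (fun x => f x - h x) := by
  obtain ⟨F, hF, eF⟩ := hf
  obtain ⟨H, hH, eH⟩ := hh
  exact ⟨fun x => F x - H x, hF.sub hH, fun x hx => by simp only [eF hx, eH hx]⟩

theorem Ext.mul {a b : ℝ} {f h : ℝ → ℝ} (hf : Ext a b f) (hh : Ext a b h) :
    Ext a b (fun x => f x * h x) := by
  obtain ⟨F, hF, eF⟩ := hf
  obtain ⟨H, hH, eH⟩ := hh
  exact ⟨fun x => F x * H x, hF.mul hH, fun x hx => by simp only [eF hx, eH hx]⟩

theorem Ext.sq {a b : ℝ} {f : ℝ → ℝ} (hf : Ext a b f) :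
    Ext a b (fun x => f x ^ 2) := by
  obtain ⟨F, hF, eF⟩ := hf
  exact ⟨fun x => F x ^ 2, hF.pow 2, fun x hx => by simp only [eF hx]⟩

theorem Ext.const (a b c : ℝ) : Ext a b (fun _ => c) :=
  ⟨fun _ => c, continuousOn_const, fun _ _ => rfl⟩

theorem Ext.smul {a b : ℝ} (c : ℝ) {f : ℝ → ℝ} (hf : Ext a b f) :
    Ext a b (fun x => c * f x) := (Ext.const a b c).mul hf

theorem Ext.integrable {a b : ℝ} (hab : a < b) {f : ℝ → ℝ} (hf : Ext a b f) :
    IntervalIntegrable f volume a b := by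
  obtain ⟨F, hF, eF⟩ := hf
  refine (hF.intervalIntegrable_of_Icc hab.le).congr_uIoo ?_
  rw [uIoo_of_le hab.le]
  exact eF.symm

/-- The identity on one piece `[a,b]`. -/
theorem piece (a b g k s ra rb : ℝ) (hab : a < b) (hg : 0 < g)
    (ρ0 p ε0 δ0 φ ψ φd ψd : ℝ → ℝ)
    (hρ : Ext a b ρ0) (hp : Ext a b p) (hε : Ext a b ε0) (hδ : Ext a b δ0)
    (hφ : Ext a b φ) (hφd : Ext a b φd) (hψd : Ext a b ψd)
    (hψ : ContinuousOn ψ (Icc a b))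
    (ρpos : ∀ x ∈ Ioo a b, 0 < ρ0 x) (ppos : ∀ x ∈ Ioo a b, 0 < p x)
    (dρ : ∀ x ∈ Ioo a b, HasDerivAt ρ0 (-g * ρ0 x / p x) x)
    (dψ : ∀ x ∈ Ioo a b, HasDerivAt ψ (ψd x) x)
    (la : Tendsto ρ0 (𝓝[>] a) (𝓝 ra)) (lb : Tendsto ρ0 (𝓝[<] b) (𝓝 rb)) :
    (∫ x in a..b, ((s * δ0 x + p x * ρ0 x) * (ψd x + k * φ x) ^ 2
        - 2 * g * ρ0 x * k * φ x * ψ x))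
      + s * (∫ x in a..b, ε0 x * ((φd x - k * ψ x) ^ 2 + (ψd x - k * φ x) ^ 2
        + (1 / 3) * (ψd x + k * φ x) ^ 2))
    = (∫ x in a..b, (s * δ0 x + s * ε0 x / 3) * (ψd x + k * φ x) ^ 2)
      + (∫ x in a..b, p x * ρ0 x * ((ψd x + k * φ x) - g / p x * ψ x) ^ 2)
      + s * (∫ x in a..b, ε0 x * ((φd x - k * ψ x) ^ 2 + (ψd x - k * φ x) ^ 2))
      + g * (rb * ψ b ^ 2 - ra * ψ a ^ 2) := by
  have eψ : Ext a b ψ := ⟨ψ, hψ, fun _ _ => rfl⟩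
  have w : Ext a b (fun x => ψd x + k * φ x) := hψd.add (hφ.smul k)
  have X : Ext a b (fun x => (φd x - k * ψ x) ^ 2 + (ψd x - k * φ x) ^ 2) :=
    (hφd.sub (eψ.smul k)).sq.add (hψd.sub (hφ.smul k)).sq
  -- the derivative of the density is integrable
  have iR : IntervalIntegrable (fun x => g * ρ0 x / p x) volume a b := by
    obtain ⟨F, hF, eF⟩ := hρ
    refine intervalIntegrable_deriv_of_nonneg (g := fun x => - F x) ?_ ?_ ?_
    · rw [uIcc_of_le hab.le]; exact hF.neg
    · rw [min_eq_left hab.le, max_eq_right hab.le]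
      intro x hx
      have h := (dρ x hx).neg
      have e : -(-g * ρ0 x / p x) = g * ρ0 x / p x := by ring
      rw [e] at h
      refine h.congr_of_eventuallyEq ?_
      filter_upwards [Ioo_mem_nhds hx.1 hx.2] with y hy
      simp [eF hy]
    · rw [min_eq_left hab.le, max_eq_right hab.le]
      intro x hx
      exact div_nonneg (mul_nonneg hg.le (ρpos x hx).le) (ppos x hx).le
  have iQ : IntervalIntegrable (fun x => g * ρ0 x / p x * ψ x ^ 2) volume a b := by
    refine iR.mul_continuousOn ?_
    rw [uIcc_of_le hab.le]; exact hψ.pow 2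
  have i1 : IntervalIntegrable (fun x => (s * δ0 x + p x * ρ0 x) * (ψd x + k * φ x) ^ 2
        - 2 * g * ρ0 x * k * φ x * ψ x) volume a b := by
    have h := ((((hδ.smul s).add (hp.mul hρ)).mul w.sq).sub
      (((hρ.mul hφ).mul eψ).smul (2 * g * k))).integrable hab
    refine h.congr (fun x _ => ?_)
    ring
  have i2 : IntervalIntegrable (fun x => ε0 x * ((φd x - k * ψ x) ^ 2 + (ψd x - k * φ x) ^ 2
        + (1 / 3) * (ψd x + k * φ x) ^ 2)) volume a b :=
    (hε.mul (X.add (w.sq.smul (1 / 3)))).integrable hab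
  have i3 : IntervalIntegrable (fun x => (s * δ0 x + s * ε0 x / 3) * (ψd x + k * φ x) ^ 2)
      volume a b := by
    have h := (((hδ.smul s).add (hε.smul (s / 3))).mul w.sq).integrable hab
    refine h.congr (fun x _ => ?_)
    ring
  have i5 : IntervalIntegrable (fun x => ε0 x * ((φd x - k * ψ x) ^ 2 + (ψd x - k * φ x) ^ 2))
      volume a b := (hε.mul X).integrable hab
  have i4 : IntervalIntegrable (fun x => p x * ρ0 x * ((ψd x + k * φ x) - g / p x * ψ x) ^ 2)
      volume a b := by
    have h := (((hp.mul hρ).mul w.sq).sub (((hρ.mul eψ).mul w).smul (2 * g))).integrable hab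
    refine (h.add (iQ.const_mul g)).congr_uIoo ?_
    rw [uIoo_of_le hab.le]
    intro x hx
    have := (ppos x hx).ne'
    simp only [Pi.add_apply]
    field_simp
    ring
  have i6 : IntervalIntegrable (fun x => -g * ρ0 x / p x * ψ x ^ 2
      + ρ0 x * (2 * ψ x * ψd x)) volume a b := by
    have h := ((hρ.mul (eψ.mul hψd)).smul 2).integrable hab
    refine (h.sub iQ).congr (fun x _ => ?_)
    ring
  have tψa : Tendsto ψ (𝓝[>] a) (𝓝 (ψ a)) :=
    ((hψ a (left_mem_Icc.2 hab.le)).mono_of_mem_nhdsWithin (Icc_mem_nhdsGT hab))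
  have tψb : Tendsto ψ (𝓝[<] b) (𝓝 (ψ b)) :=
    ((hψ b (right_mem_Icc.2 hab.le)).mono_of_mem_nhdsWithin (Icc_mem_nhdsLT hab))
  have ftc : (∫ x in a..b, (-g * ρ0 x / p x * ψ x ^ 2 + ρ0 x * (2 * ψ x * ψd x)))
      = rb * ψ b ^ 2 - ra * ψ a ^ 2 := by
    refine integral_eq_sub_of_hasDerivAt_of_tendsto (f := fun x => ρ0 x * ψ x ^ 2) hab ?_ i6
      (la.mul (tψa.pow 2)) (lb.mul (tψb.pow 2))
    intro x hx
    have h := (dρ x hx).mul ((dψ x hx).pow 2)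
    refine h.congr_deriv ?_
    simp
  rw [← ftc, ← intervalIntegral.integral_const_mul, ← intervalIntegral.integral_const_mul, ← intervalIntegral.integral_const_mul,
    ← intervalIntegral.integral_add i1 (i2.const_mul s), ← intervalIntegral.integral_add i3 i4,
    ← intervalIntegral.integral_add (i3.add i4) (i5.const_mul s),
    ← intervalIntegral.integral_add ((i3.add i4).add (i5.const_mul s)) (i6.const_mul g)]
  refine integral_congr_Ioo_of_le hab.le (fun x hx => ?_)
  have := (ppos x hx).ne'
  field_simp
  ring

/-- The completed-square decomposition of the energy `E(φ,ψ;s)`, where `ρ0⁺ = ρ0 0` and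
`ρ0⁻` is the left limit of `ρ0` at `0`. -/
theorem energy_completed_square (m l g σ k s : ℝ) (ρ0 p ε0 δ0 φ ψ φd ψd : ℝ → ℝ)
    (ρ0minus : ℝ)
    (hm : 0 < m) (hl : 0 < l) (hg : 0 < g) (hσ : 0 ≤ σ) (hk : 0 < k) (hs : 0 < s)
    (hprof : ProfilesHyp m l ρ0 p ε0 δ0)
    (hhydro : Hydrostatic m l g ρ0 p)
    (hρm : Tendsto ρ0 (𝓝[<] 0) (𝓝 ρ0minus))
    (hadm : Admissible m l φ ψ φd ψd) :
    energyE m l g σ k ρ0 p ε0 δ0 φ ψ φd ψd s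
      = (1 / 2) * pwInt m l (fun x => (s * δ0 x + s * ε0 x / 3) * (ψd x + k * φ x) ^ 2)
        + (1 / 2) * pwInt m l (fun x =>
            p x * ρ0 x * ((ψd x + k * φ x) - g / p x * ψ x) ^ 2)
        + (s / 2) * pwInt m l (fun x =>
            ε0 x * ((φd x - k * ψ x) ^ 2 + (ψd x - k * φ x) ^ 2))
        + (σ * k ^ 2 - g * (ρ0 0 - ρ0minus)) / 2 * (ψ 0) ^ 2 := by
  obtain ⟨⟨ρl, ρr⟩, ⟨pl, pr⟩, ⟨εl, εr⟩, ⟨δl, δr⟩, ρpos, ppos, -, -⟩ := hprof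
  obtain ⟨⟨cφ, -, -, φl, φr⟩, ⟨cψ, dl, dr, ψl, ψr⟩, -, -, ψa, ψb⟩ := hadm
  obtain ⟨hl1, hr1⟩ := hhydro
  have L : ∀ f : ℝ → ℝ, (∃ F : ℝ → ℝ, ContinuousOn F (Icc (-m) 0) ∧ EqOn f F (Ico (-m) 0)) →
      Ext (-m) 0 f := fun f ⟨F, h, e⟩ => ⟨F, h, e.mono Ioo_subset_Ico_self⟩
  have R : ∀ f : ℝ → ℝ, (∃ F : ℝ → ℝ, ContinuousOn F (Icc 0 l) ∧ EqOn f F (Ioc 0 l)) →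
      Ext 0 l f := fun f ⟨F, h, e⟩ => ⟨F, h, e.mono Ioo_subset_Ioc_self⟩
  have C : ∀ f : ℝ → ℝ, ContinuousOn f (Icc 0 l) → Ext 0 l f :=
    fun f h => ⟨f, h, fun _ _ => rfl⟩
  have hm0 : -m < 0 := by linarith
  have sl : Icc (-m) 0 ⊆ Icc (-m) l := Icc_subset_Icc le_rfl hl.le
  have sr : Icc 0 l ⊆ Icc (-m) l := Icc_subset_Icc hm0.le le_rfl
  have tl : Tendsto ρ0 (𝓝[>] (-m)) (𝓝 (ρ0 (-m))) := by
    have h := (hl1 (-m) (left_mem_Ico.2 hm0)).continuousWithinAt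
    exact h.mono_of_mem_nhdsWithin (Ico_mem_nhdsGT hm0)
  have tr0 : Tendsto ρ0 (𝓝[>] 0) (𝓝 (ρ0 0)) :=
    (ρr 0 (left_mem_Icc.2 hl.le)).mono_of_mem_nhdsWithin (Icc_mem_nhdsGT hl)
  have trl : Tendsto ρ0 (𝓝[<] l) (𝓝 (ρ0 l)) :=
    (ρr l (right_mem_Icc.2 hl.le)).mono_of_mem_nhdsWithin (Icc_mem_nhdsLT hl)
  have A := piece (-m) 0 g k s (ρ0 (-m)) ρ0minus hm0 hg ρ0 p ε0 δ0 φ ψ φd ψd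
    (L _ ρl) (L _ pl) (L _ εl) (L _ δl) ⟨φ, cφ.mono sl, fun _ _ => rfl⟩ (L _ φl) (L _ ψl)
    (cψ.mono sl) (fun x hx => ρpos x (sl (Ioo_subset_Icc_self hx)))
    (fun x hx => ppos x (sl (Ioo_subset_Icc_self hx)))
    (fun x hx => (hl1 x (Ioo_subset_Ico_self hx)).hasDerivAt (Ico_mem_nhds hx.1 hx.2))
    (fun x hx => (dl x (Ioo_subset_Ico_self hx)).hasDerivAt (Icc_mem_nhds hx.1 hx.2))
    tl hρm
  have B := piece 0 l g k s (ρ0 0) (ρ0 l) hl hg ρ0 p ε0 δ0 φ ψ φd ψd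
    (C _ ρr) (C _ pr) (C _ εr) (C _ δr) ⟨φ, cφ.mono sr, fun _ _ => rfl⟩ (R _ φr) (R _ ψr)
    (cψ.mono sr) (fun x hx => ρpos x (sr (Ioo_subset_Icc_self hx)))
    (fun x hx => ppos x (sr (Ioo_subset_Icc_self hx)))
    (fun x hx => (hr1 x (Ioo_subset_Ioc_self hx)).hasDerivAt (Ioc_mem_nhds hx.1 hx.2))
    (fun x hx => (dr x (Ioo_subset_Ioc_self hx)).hasDerivAt (Icc_mem_nhds hx.1 hx.2))
    tr0 trl
  rw [ψa] at A
  rw [ψb] at B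
  unfold energyE pwInt
  linear_combination (1 / 2) * A + (1 / 2) * B

end RT
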